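/- arXiv:2605.00390 — 2 statements merged into one kernel-verified Lean document; each statement's English description precedes it below -/
import Mathlib

section
/- Let V be a finite vertex set, let w : V × V → ℝ be a symmetric weight function, set s_i = Σ_{j ∈ V} w(i,j) for each i ∈ V and 2m = Σ_{i,j ∈ V} w(i,j), and assume m ≠ 0. Let L : V → ℕ be a labeling, let i ∈ V be a vertex forming a singleton community (i.e. L(j) ≠ L(i) for every j ≠ i), and let c ∈ ℕ with c ≠ L(i). Let C = { j ∈ V : j ≠ i and L(j) = c } and vol(C) = Σ_{j ∈ C} s_j, and let L' agree with L except that L'(i) = c. Then the modularity gain of moving i to community C is M(L') − M(L) = (1/m)·( Σ_{j ∈ C} w(i,j) − s_i·vol(C)/(2m) ). -/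
open Finset

/-- The modularity of a labeling `L` for a symmetric weight function `w` with total weight
`2m`: `M(L) = (1/(2m)) · Σ_{i,j} (w i j − s i · s j/(2m)) · [L i = L j]`, where
`s i = Σ_j w i j`. -/
noncomputable def modularity {V : Type*} [Fintype V] (w : V → V → ℝ) (m : ℝ)
    (L : V → ℕ) : ℝ :=
  (1 / (2 * m)) * ∑ i, ∑ j,
    (w i j - (∑ j', w i j') * (∑ j', w j j') / (2 * m)) * (if L i = L j then 1 else 0)

/-!
Split the vertex `i` off the double sum defining the modularity. Relabeling `i` changes only its
row and its column, which agree by symmetry, so the double sum grows by twice the difference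
between the row sums over the community that `i` joins and over the one it leaves. The latter
sum is empty when `i` forms a singleton community.
-/

section CommunitySum

variable {V κ M : Type*} [DecidableEq V] [DecidableEq κ]

/-- The sum of `B` over the ordered pairs of vertices of `S` lying in the same community of the
labeling `L`. The vertex set `S` is explicit so that a single vertex can be split off; with
`S = univ` and `B` the modularity matrix this is the unnormalized modularity. -/
def communitySum [AddCommMonoid M] (B : V → V → M) (L : V → κ) (S : Finset V) : M :=
  ∑ a ∈ S, ∑ b ∈ S, if L a = L b then B a b else 0

theorem communitySum_insert [AddCommMonoid M] {B : V → V → M} (hB : ∀ a b, B a b = B b a)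
    (L : V → κ) {S : Finset V} {i : V} (hi : i ∉ S) :
    communitySum B L (insert i S) =
      B i i + 2 • (∑ j ∈ S with L j = L i, B i j) + communitySum B L S := by
  have row : ∑ b ∈ S, (if L i = L b then B i b else 0) = ∑ j ∈ S with L j = L i, B i j := by
    simp only [sum_filter, eq_comm]
  have column : ∑ a ∈ S, (if L a = L i then B a i else 0) = ∑ j ∈ S with L j = L i, B i j := by
    simp only [sum_filter, hB i]
  simp only [communitySum, sum_insert hi, sum_add_distrib, row, column, if_true]
  abel

theorem communitySum_update_of_notMem [AddCommMonoid M] (B : V → V → M) (L : V → κ)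
    {S : Finset V} {i : V} (hi : i ∉ S) (c : κ) :
    communitySum B (Function.update L i c) S = communitySum B L S := by
  have unmoved : ∀ a ∈ S, Function.update L i c a = L a := fun a ha =>
    Function.update_of_ne (ne_of_mem_of_not_mem ha hi) c L
  refine sum_congr rfl fun a ha => sum_congr rfl fun b hb => ?_
  rw [unmoved a ha, unmoved b hb]

theorem communitySum_update_sub [AddCommGroup M] {B : V → V → M} (hB : ∀ a b, B a b = B b a)
    (L : V → κ) {S : Finset V} {i : V} (hi : i ∈ S) (c : κ) :
    communitySum B (Function.update L i c) S - communitySum B L S =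
      2 • ((∑ j ∈ S with j ≠ i ∧ L j = c, B i j) -
        ∑ j ∈ S with j ≠ i ∧ L j = L i, B i j) := by
  have hi' : i ∉ S.erase i := notMem_erase i S
  have joined : {j ∈ S.erase i | Function.update L i c j = c} = {j ∈ S | j ≠ i ∧ L j = c} := by
    grind
  have departed : {j ∈ S.erase i | L j = L i} = {j ∈ S | j ≠ i ∧ L j = L i} := by grind
  rw [← insert_erase hi, communitySum_insert hB _ hi', communitySum_insert hB _ hi',
    communitySum_update_of_notMem B L hi', insert_erase hi, Function.update_self, joined,
    departed]
  abel

end CommunitySum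

section ModularityMatrix

variable {V K : Type*} [Fintype V] [Field K]

/-- The modularity matrix `w i j - s i * s j / (2 * m)`, where `s i = ∑ j, w i j`: the excess of
each weight over its expectation in the configuration model of total weight `2 * m`. -/
def modularityMatrix (w : V → V → K) (m : K) (i j : V) : K :=
  w i j - (∑ j', w i j') * (∑ j', w j j') / (2 * m)

theorem modularityMatrix_comm {w : V → V → K} (hw : ∀ i j, w i j = w j i) (m : K) (i j : V) :
    modularityMatrix w m i j = modularityMatrix w m j i := by
  rw [modularityMatrix, modularityMatrix, hw i j, mul_comm (∑ j', w i j')]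

theorem sum_modularityMatrix (w : V → V → K) (m : K) (i : V) (C : Finset V) :
    ∑ j ∈ C, modularityMatrix w m i j =
      (∑ j ∈ C, w i j) - (∑ j', w i j') * (∑ j ∈ C, ∑ j', w j j') / (2 * m) := by
  simp only [modularityMatrix, sum_sub_distrib, sum_div, mul_sum]

end ModularityMatrix

theorem modularity_eq_communitySum {V : Type*} [Fintype V] (w : V → V → ℝ) (m : ℝ) (L : V → ℕ) :
    modularity w m L = 1 / (2 * m) * communitySum (modularityMatrix w m) L univ := by
  simp only [modularity, communitySum, modularityMatrix, mul_boole]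

theorem modularity_gain_general {V : Type*} [Fintype V] [DecidableEq V] (w : V → V → ℝ)
    (hsymm : ∀ i j, w i j = w j i) (m : ℝ) (hm : 2 * m = ∑ i, ∑ j, w i j) (hm0 : m ≠ 0)
    (L : V → ℕ) (i : V) (c : ℕ) :
    modularity w m (Function.update L i c) - modularity w m L =
      (1 / m) *
        (((∑ j with j ≠ i ∧ L j = c, w i j) -
            (∑ j', w i j') * (∑ j with j ≠ i ∧ L j = c, ∑ j', w j j') / (2 * m)) -
          ((∑ j with j ≠ i ∧ L j = L i, w i j) -
            (∑ j', w i j') * (∑ j with j ≠ i ∧ L j = L i, ∑ j', w j j') / (2 * m))) := by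
  rw [modularity_eq_communitySum, modularity_eq_communitySum, ← mul_sub,
    communitySum_update_sub (modularityMatrix_comm hsymm m) L (mem_univ i) c]
  simp only [← sum_modularityMatrix, nsmul_eq_mul, Nat.cast_ofNat]
  field_simp

/-- Modularity gain of a local move: if vertex `i` forms a singleton community under `L` and
`c ≠ L i`, then moving `i` to the community `C = {j ≠ i | L j = c}` changes the modularity by
`M(L') − M(L) = (1/m)·(Σ_{j ∈ C} w i j − s i · vol(C)/(2m))`, where `s i = Σ_j w i j` and
`vol(C) = Σ_{j ∈ C} s j`. -/
theorem modularity_gain {V : Type*} [Fintype V] [DecidableEq V] (w : V → V → ℝ)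
    (hsymm : ∀ i j, w i j = w j i) (m : ℝ)
    (hm : 2 * m = ∑ i, ∑ j, w i j) (hm0 : m ≠ 0)
    (L : V → ℕ) (i : V) (hsingleton : ∀ j, j ≠ i → L j ≠ L i)
    (c : ℕ) (hc : c ≠ L i) :
    modularity w m (Function.update L i c) - modularity w m L =
      (1 / m) * ((∑ j ∈ univ.filter fun j => j ≠ i ∧ L j = c, w i j) -
        (∑ j', w i j') * (∑ j ∈ univ.filter fun j => j ≠ i ∧ L j = c, ∑ j', w j j')
          / (2 * m)) := by
  have no_companions : ({j | j ≠ i ∧ L j = L i} : Finset V) = ∅ :=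
    filter_eq_empty_iff.mpr fun j _ ⟨hj, hL⟩ => hsingleton j hj hL
  simpa [no_companions] using modularity_gain_general w hsymm m hm hm0 L i c
end

section
/- Let V be a finite vertex set, let w : V × V → ℝ be a symmetric weight function, and let γ ∈ ℝ. For a labeling L : V → ℕ define the constant Potts energy E_γ(L) = −Σ_{i,j ∈ V} w(i,j)·[L(i) = L(j)] + γ·Σ_{i,j ∈ V} [L(i) = L(j)]. Let i ∈ V be a vertex forming a singleton community (i.e. L(j) ≠ L(i) for every j ≠ i), let c ∈ ℕ with c ≠ L(i), let C = { j ∈ V : j ≠ i and L(j) = c }, and let L' agree with L except that L'(i) = c. Then E_γ(L') − E_γ(L) = −2·( Σ_{j ∈ C} w(i,j) − γ·|C| ). Hence greedily decreasing the constant Potts energy by local moves is equivalent to greedily maximizing the label-propagation gain Σ_{j ∈ C} w(i,j) − γ·|C|. -/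
open Finset

/-- The constant Potts energy with attractive interactions `w` and constant null model `γ`:
`E_γ(L) = −Σ_{i,j} w i j·[L i = L j] + γ·Σ_{i,j} [L i = L j]`. -/
noncomputable def cpmEnergy {V : Type*} [Fintype V] (w : V → V → ℝ) (γ : ℝ)
    (L : V → ℕ) : ℝ :=
  -(∑ i, ∑ j, w i j * (if L i = L j then 1 else 0)) +
    γ * ∑ i, ∑ j, (if L i = L j then (1 : ℝ) else 0)

/-- The label-propagation gain of moving vertex `i` to the community
`C = {j ≠ i | L j = c}`: `Σ_{j ∈ C} w i j − γ·|C|`. -/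
noncomputable def lpaGain {V : Type*} [Fintype V] [DecidableEq V] (w : V → V → ℝ) (γ : ℝ)
    (L : V → ℕ) (i : V) (c : ℕ) : ℝ :=
  (∑ j ∈ univ.filter fun j => j ≠ i ∧ L j = c, w i j) -
    γ * ((univ.filter fun j => j ≠ i ∧ L j = c).card : ℝ)

/-!
Split the double sum at the vertex `i`: the pairs avoiding `i` form the energy of the graph with `i`
deleted, the diagonal pair contributes `γ - w i i`, and the pairs meeting `i` in one coordinate
contribute minus the gain of the community of `i`, once for each orientation. Relabeling `i` changes
only this last part, trading the gain of its old community for that of the new one; the gain of a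
singleton's own community vanishes.
-/

theorem sum_sum_eq_add_sum_subtype_ne {V M : Type*} [Fintype V] [DecidableEq V]
    [AddCommMonoid M] (f : V → V → M) (i : V) :
    ∑ a, ∑ b, f a b =
      f i i + ∑ j : {j // j ≠ i}, (f i j + f j i) +
        ∑ a : {j // j ≠ i}, ∑ b : {j // j ≠ i}, f a b := by
  simp only [Fintype.sum_eq_add_sum_subtype_ne _ i, sum_add_distrib, add_assoc]

theorem cpmEnergy_eq_sum_ite {V : Type*} [Fintype V] (w : V → V → ℝ) (γ : ℝ) (L : V → ℕ) :
    cpmEnergy w γ L = ∑ a, ∑ b, if L a = L b then γ - w a b else 0 := by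
  simp only [cpmEnergy, mul_sum, ← sum_neg_distrib, ← sum_add_distrib]
  refine sum_congr rfl fun a _ => sum_congr rfl fun b _ => ?_
  split_ifs <;> ring

section VertexMove

variable {V : Type*} [Fintype V] [DecidableEq V]

theorem lpaGain_eq_sum_subtype_ne (w : V → V → ℝ) (γ : ℝ) (L : V → ℕ) (i : V) (c : ℕ) :
    lpaGain w γ L i c = ∑ j : {j // j ≠ i}, if L j = c then w i j - γ else 0 := by
  calc lpaGain w γ L i c
      = ∑ j with j ≠ i ∧ L j = c, (w i j - γ) := by
        rw [lpaGain, sum_sub_distrib, sum_const, nsmul_eq_mul, mul_comm γ]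
    _ = ∑ j with j ≠ i, if L j = c then w i j - γ else 0 := by
        rw [← filter_filter, sum_filter]
    _ = ∑ j : {j // j ≠ i}, if L j = c then w i j - γ else 0 :=
        sum_subtype _ (by simp) _

theorem lpaGain_update_self (w : V → V → ℝ) (γ : ℝ) (L : V → ℕ) (i : V) (d c : ℕ) :
    lpaGain w γ (Function.update L i d) i c = lpaGain w γ L i c := by
  have update_eq (j : {j // j ≠ i}) : Function.update L i d j = L j :=
    Function.update_of_ne j.prop d L
  simp only [lpaGain_eq_sum_subtype_ne, update_eq]

theorem lpaGain_eq_zero_of_singleton (w : V → V → ℝ) (γ : ℝ) {L : V → ℕ} {i : V}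
    (hsingleton : ∀ j, j ≠ i → L j ≠ L i) : lpaGain w γ L i (L i) = 0 := by
  rw [lpaGain_eq_sum_subtype_ne]
  exact sum_eq_zero fun j _ => if_neg (hsingleton j j.prop)

theorem cpmEnergy_eq_subtype_ne_sub_lpaGain (w : V → V → ℝ) (γ : ℝ) (L : V → ℕ) (i : V) :
    cpmEnergy w γ L =
      cpmEnergy (fun a b : {j // j ≠ i} => w a b) γ (fun a => L a) + (γ - w i i) -
        (lpaGain w γ L i (L i) + lpaGain (flip w) γ L i (L i)) := by
  have cross_terms : ∑ j : {j // j ≠ i}, ((if L i = L j then γ - w i j else 0) +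
        if L j = L i then γ - w j i else 0) =
      -(lpaGain w γ L i (L i) + lpaGain (flip w) γ L i (L i)) := by
    simp only [lpaGain_eq_sum_subtype_ne, flip, ← sum_add_distrib, ← sum_neg_distrib]
    refine sum_congr rfl fun j _ => ?_
    simp only [eq_comm (a := L i)]
    split_ifs <;> ring
  rw [cpmEnergy_eq_sum_ite, cpmEnergy_eq_sum_ite, sum_sum_eq_add_sum_subtype_ne _ i,
    cross_terms, if_pos rfl]
  ring

theorem cpmEnergy_update_sub (w : V → V → ℝ) (γ : ℝ) (L : V → ℕ) (i : V) (c : ℕ) :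
    cpmEnergy w γ (Function.update L i c) - cpmEnergy w γ L =
      (lpaGain w γ L i (L i) + lpaGain (flip w) γ L i (L i)) -
        (lpaGain w γ L i c + lpaGain (flip w) γ L i c) := by
  have update_eq (j : {j // j ≠ i}) : Function.update L i c j = L j :=
    Function.update_of_ne j.prop c L
  rw [cpmEnergy_eq_subtype_ne_sub_lpaGain w γ (Function.update L i c) i,
    cpmEnergy_eq_subtype_ne_sub_lpaGain w γ L i]
  simp only [lpaGain_update_self, Function.update_self, update_eq]
  ring

theorem cpmEnergy_gain_general (w : V → V → ℝ) (hsymm : ∀ i j, w i j = w j i) (γ : ℝ)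
    (L : V → ℕ) (i : V) (c : ℕ) :
    (cpmEnergy w γ (Function.update L i c) - cpmEnergy w γ L =
      -2 * (lpaGain w γ L i c - lpaGain w γ L i (L i))) ∧
    (∀ c' : ℕ,
      (cpmEnergy w γ (Function.update L i c) ≤ cpmEnergy w γ (Function.update L i c') ↔
        lpaGain w γ L i c' ≤ lpaGain w γ L i c)) := by
  have flip_eq : flip w = w := funext₂ fun a b => hsymm b a
  have energy_diff (d : ℕ) : cpmEnergy w γ (Function.update L i d) - cpmEnergy w γ L =
      -2 * (lpaGain w γ L i d - lpaGain w γ L i (L i)) := by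
    rw [cpmEnergy_update_sub, flip_eq]
    ring
  refine ⟨energy_diff c, fun c' => ?_⟩
  rw [← sub_le_sub_iff_right (cpmEnergy w γ L), energy_diff, energy_diff,
    mul_le_mul_left_of_neg (by norm_num), sub_le_sub_iff_right]

end VertexMove

/-- Constant-Potts-model gain of a local move: if vertex `i` forms a singleton community under
`L` and `c ≠ L i`, then moving `i` to the community `C = {j ≠ i | L j = c}` changes the
constant Potts energy by `E_γ(L') − E_γ(L) = −2·(Σ_{j ∈ C} w i j − γ·|C|)`; hence greedily
decreasing the constant Potts energy by local moves is equivalent to greedily maximizing the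
label-propagation gain. -/
theorem cpmEnergy_gain {V : Type*} [Fintype V] [DecidableEq V] (w : V → V → ℝ)
    (hsymm : ∀ i j, w i j = w j i) (γ : ℝ)
    (L : V → ℕ) (i : V) (hsingleton : ∀ j, j ≠ i → L j ≠ L i)
    (c : ℕ) (hc : c ≠ L i) :
    (cpmEnergy w γ (Function.update L i c) - cpmEnergy w γ L = -2 * lpaGain w γ L i c) ∧
    (∀ c' : ℕ, c' ≠ L i →
      (cpmEnergy w γ (Function.update L i c) ≤ cpmEnergy w γ (Function.update L i c') ↔
        lpaGain w γ L i c' ≤ lpaGain w γ L i c)) := by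
  obtain ⟨energy_diff, le_iff⟩ := cpmEnergy_gain_general w hsymm γ L i c
  exact ⟨by rwa [lpaGain_eq_zero_of_singleton w γ hsingleton, sub_zero] at energy_diff,
    fun c' _ => le_iff c'⟩
end
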